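/- Under the BARSS mixture setup described in the context, for γ ∈ (0,1) define the outage capacity C_o(γ) = sup{τ ≥ 0 : P(τ-outage) ≤ γ}, with the supremum taken in [0,∞] and sup ∅ = 0. Then C_o(γ) ≤ sup{τ ≥ 0 : 1 − Σ_{k=1}^K p_k* ∫₀^∞ f_k(r)·E[V̂_k⁺(H_k,τ,r)] dr ≤ γ} and C_o(γ) ≥ sup{τ ≥ 0 : 1 − Σ_{k=1}^K p_k* ∫₀^∞ f_k(r)·E[V̂_k⁻(H_k,τ,r)] dr ≤ γ}. -/

import Mathlib

open MeasureTheory ProbabilityTheory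
open scoped ProbabilityTheory ENNReal

/-- The standard normal cumulative distribution function. -/
noncomputable def stdNormalCDF (x : ℝ) : ℝ :=
  (Real.sqrt (2 * Real.pi))⁻¹ * ∫ t in Set.Iic x, Real.exp (-(t ^ 2) / 2)

/-- The Berry–Esseen multiplicative function `c(x) = min{0.4785, 31.935/(1+|x|³)}`. -/
noncomputable def berryC (x : ℝ) : ℝ := min 0.4785 (31.935 / (1 + |x| ^ 3))

lemma aux_cdf_meas : Measurable stdNormalCDF := by
  have hi : Integrable (fun t : ℝ => Real.exp (-(t ^ 2) / 2)) := by
    have := integrable_exp_neg_mul_sq (b := (1/2 : ℝ)) (by norm_num)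
    refine this.congr (Filter.Eventually.of_forall fun t => ?_)
    simp only []
    congr 1
    ring
  have : Monotone stdNormalCDF := by
    intro x y hxy
    unfold stdNormalCDF
    refine mul_le_mul_of_nonneg_left ?_ (by positivity)
    refine setIntegral_mono_set hi.integrableOn ?_ ?_
    · exact Filter.Eventually.of_forall fun t => (Real.exp_pos _).le
    · exact (Set.Iic_subset_Iic.2 hxy).eventuallyLE
  exact this.measurable

lemma aux_berry_meas : Measurable berryC := by
  unfold berryC
  fun_prop

lemma aux_indep {Ω : Type*} [MeasureSpace Ω] [IsProbabilityMeasure (ℙ : Measure Ω)]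
    (X Y : Ω → ℝ) (hX : Measurable X) (hY : Measurable Y) (h : IndepFun X Y ℙ)
    (z : ℝ → ℝ) (hz : Measurable z) :
    Measurable (fun x => (ℙ {ω | Y ω ≤ z x}).toReal) ∧
    (ℙ {ω | Y ω ≤ z (X ω)}).toReal = ∫ ω', (ℙ {ω | Y ω ≤ z (X ω')}).toReal := by
  have hA : MeasurableSet {p : ℝ × ℝ | p.2 ≤ z p.1} :=
    measurableSet_le measurable_snd (hz.comp measurable_fst)
  have : IsProbabilityMeasure (Measure.map Y ℙ) := Measure.isProbabilityMeasure_map hY.aemeasurable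
  have : IsProbabilityMeasure (Measure.map X ℙ) := Measure.isProbabilityMeasure_map hX.aemeasurable
  have e : ∀ x, ℙ {ω | Y ω ≤ z x} = Measure.map Y ℙ (Prod.mk x ⁻¹' {p : ℝ × ℝ | p.2 ≤ z p.1}) := by
    intro x
    rw [Measure.map_apply hY (measurable_prodMk_left hA)]
    rfl
  have hm : Measurable (fun x => ℙ {ω | Y ω ≤ z x}) := by
    simp_rw [e]
    exact measurable_measure_prodMk_left hA
  refine ⟨hm.ennreal_toReal, ?_⟩
  rw [integral_toReal (f := fun ω' => ℙ {ω | Y ω ≤ z (X ω')}) (hm.comp hX).aemeasurable (Filter.Eventually.of_forall fun _ => measure_lt_top _ _)]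
  congr 1
  have e2 : ℙ {ω | Y ω ≤ z (X ω)} = Measure.map (fun ω => (X ω, Y ω)) ℙ {p : ℝ × ℝ | p.2 ≤ z p.1} := by
    rw [Measure.map_apply (hX.prodMk hY) hA]; rfl
  rw [e2, (indepFun_iff_map_prod_eq_prod_map_map hX.aemeasurable hY.aemeasurable).1 h,
    Measure.prod_apply hA, lintegral_map (measurable_measure_prodMk_left hA) hX]
  simp_rw [e]

lemma aux_event (P G N PG τ h i m s : ℝ) (hP : 0 < P) (hPG : 1 ≤ PG) (hτ : 0 < τ)
    (hG : 0 < G) (hh : 0 ≤ h) (hs : 0 < s) (hpos : 0 < N + i / PG) :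
    ¬ (Real.log (1 + P * h * G / (N + i / PG)) < τ) ↔
      (i - m) / s ≤ (P * (h * G / (Real.exp τ - 1) - N / P) * PG - m) / s := by
  have he : 0 < Real.exp τ - 1 := by have := Real.add_one_lt_exp hτ.ne'; linarith
  have hPG' : 0 < PG := by linarith
  have hq : 0 ≤ P * h * G / (N + i / PG) := by positivity
  rw [not_lt, Real.le_log_iff_exp_le (by linarith), div_le_div_iff_of_pos_right hs,
    sub_le_sub_iff_right, ← sub_le_iff_le_add', le_div_iff₀ hpos]
  have e1 : P * (h * G / (Real.exp τ - 1) - N / P) * PG =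
      (P * h * G / (Real.exp τ - 1) - N) * PG := by field_simp
  rw [e1, ← div_le_iff₀ hPG', le_sub_iff_add_le', le_div_iff₀ he, mul_comm]

lemma aux_core {Ω : Type*} [MeasureSpace Ω] [IsProbabilityMeasure (ℙ : Measure Ω)]
    (P : ℝ) (hP : 0 < P) (G : ℝ → ℝ) (hGmeas : Measurable G)
    (hGpos : ∀ r : ℝ, 0 ≤ r → 0 < G r)
    (N₀ PG : ℝ) (hPG : 1 ≤ PG)
    (f : ℝ → ℝ) (hfmeas : Measurable f)
    (hfnn : ∀ r, 0 ≤ f r) (hfint : ∫ r in Set.Ici (0 : ℝ), f r = 1)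
    (H : Ω → ℝ) (hHmeas : Measurable H) (hHnn : ∀ ω, 0 ≤ H ω)
    (I : ℝ → Ω → ℝ)
    (hImeas : Measurable (Function.uncurry I))
    (hInn : ∀ r : ℝ, 0 ≤ r → ∀ ω, 0 ≤ I r ω)
    (hindep : ∀ r : ℝ, 0 ≤ r → IndepFun H (I r) ℙ)
    (μ σ Ξ : ℝ → ℝ)
    (hμmeas : Measurable μ) (hσmeas : Measurable σ)
    (hΞmeas : Measurable Ξ)
    (hσpos : ∀ r : ℝ, 0 ≤ r → 0 < σ r)
    (hpos : ∀ r : ℝ, 0 ≤ r → ∀ᵐ ω ∂(ℙ : Measure Ω), 0 < N₀ + I r ω / PG)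
    (hGauss : ∀ r : ℝ, 0 ≤ r → ∀ x : ℝ,
      |(ℙ {ω | (I r ω - μ r) / σ r ≤ x}).toReal - stdNormalCDF x| ≤ Ξ r * berryC x)
    (ζ Vp Vm : ℝ → ℝ → ℝ → ℝ)
    (hζ : ∀ h τ r, ζ h τ r =
      (P * (h * G r / (Real.exp τ - 1) - N₀ / P) * PG - μ r) / σ r)
    (hVp : ∀ h τ r, Vp h τ r =
      if (Real.exp τ - 1) * N₀ / (P * G r) ≤ h then
        min 1 (stdNormalCDF (ζ h τ r) + Ξ r * berryC (ζ h τ r)) else 0)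
    (hVm : ∀ h τ r, Vm h τ r =
      if (Real.exp τ - 1) * N₀ / (P * G r) ≤ h then
        max 0 (stdNormalCDF (ζ h τ r) - Ξ r * berryC (ζ h τ r)) else 0)
    (τ : ℝ) (hτ : 0 < τ) :
    (1 - ∫ r in Set.Ici (0 : ℝ),
        (ℙ {ω | Real.log (1 + P * H ω * G r / (N₀ + I r ω / PG)) < τ}).toReal * f r) ≤
      (∫ r in Set.Ici (0 : ℝ), f r * ∫ ω, Vp (H ω) τ r) ∧
    (∫ r in Set.Ici (0 : ℝ), f r * ∫ ω, Vm (H ω) τ r) ≤ 1 - ∫ r in Set.Ici (0 : ℝ),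
        (ℙ {ω | Real.log (1 + P * H ω * G r / (N₀ + I r ω / PG)) < τ}).toReal * f r := by
  have he : 0 < Real.exp τ - 1 := by have := Real.add_one_lt_exp hτ.ne'; linarith
  have hPG' : 0 < PG := by linarith
  have hfi : IntegrableOn f (Set.Ici 0) := by
    by_contra hc
    rw [integral_undef hc] at hfint
    norm_num at hfint
  have hIr : ∀ r, Measurable (I r) := fun r => hImeas.comp measurable_prodMk_left
  have hI' : Measurable (fun p : ℝ × Ω => I p.1 p.2) := hImeas
  -- joint measurability
  have hcdf := aux_cdf_meas
  have hber := aux_berry_meas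
  have hζm : Measurable (fun p : ℝ × Ω => ζ (H p.2) τ p.1) := by
    simp_rw [hζ]
    fun_prop
  have hset : MeasurableSet {p : ℝ × Ω | (Real.exp τ - 1) * N₀ / (P * G p.1) ≤ H p.2} :=
    measurableSet_le (by fun_prop) (by fun_prop)
  have hVpm : Measurable (fun p : ℝ × Ω => Vp (H p.2) τ p.1) := by
    simp_rw [hVp]
    refine Measurable.ite hset ?_ measurable_const
    exact measurable_const.min ((hcdf.comp hζm).add ((hΞmeas.comp measurable_fst).mul (hber.comp hζm)))
  have hVmm : Measurable (fun p : ℝ × Ω => Vm (H p.2) τ p.1) := by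
    simp_rw [hVm]
    refine Measurable.ite hset ?_ measurable_const
    exact measurable_const.max ((hcdf.comp hζm).sub ((hΞmeas.comp measurable_fst).mul (hber.comp hζm)))
  set O : ℝ → ℝ := fun r =>
    (ℙ {ω | Real.log (1 + P * H ω * G r / (N₀ + I r ω / PG)) < τ}).toReal with hO
  have hOset : MeasurableSet {p : ℝ × Ω |
      Real.log (1 + P * H p.2 * G p.1 / (N₀ + I p.1 p.2 / PG)) < τ} := by
    refine measurableSet_lt ?_ measurable_const
    refine Real.measurable_log.comp ?_
    fun_prop
  have hOm : Measurable O := (measurable_measure_prodMk_left hOset).ennreal_toReal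
  have hO0 : ∀ r, 0 ≤ O r := fun r => ENNReal.toReal_nonneg
  have hO1 : ∀ r, O r ≤ 1 := fun r => measureReal_le_one
  -- pointwise facts
  set F : ℝ → ℝ → ℝ := fun r x => (ℙ {ω | (I r ω - μ r) / σ r ≤ x}).toReal with hF
  have hF0 : ∀ r x, 0 ≤ F r x := fun r x => ENNReal.toReal_nonneg
  have hF1 : ∀ r x, F r x ≤ 1 := fun r x => measureReal_le_one
  have hFz : ∀ r, 0 ≤ r → ∀ h, ¬ ((Real.exp τ - 1) * N₀ / (P * G r) ≤ h) → F r (ζ h τ r) = 0 := by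
    intro r hr h hh
    have hg := hGpos r hr
    have : {ω | (I r ω - μ r) / σ r ≤ ζ h τ r} = ∅ := by
      ext ω
      simp only [Set.mem_setOf_eq, Set.mem_empty_iff_false, iff_false]
      rw [hζ, div_le_div_iff_of_pos_right (hσpos r hr), sub_le_sub_iff_right, not_le]
      rw [not_le, lt_div_iff₀ (by positivity)] at hh
      have h1 : P * (h * G r / (Real.exp τ - 1) - N₀ / P) = h * (P * G r) / (Real.exp τ - 1) - N₀ := by
        field_simp
      have h2 : h * (P * G r) / (Real.exp τ - 1) < N₀ := by
        rw [div_lt_iff₀ he]; linarith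
      rw [h1]
      have := mul_neg_of_neg_of_pos (sub_neg.2 h2) hPG'
      linarith [hInn r hr ω]
    simp [hF, this]
  have hub : ∀ r, 0 ≤ r → ∀ h, F r (ζ h τ r) ≤ Vp h τ r ∧ Vp h τ r ≤ 1 := by
    intro r hr h
    rw [hVp]
    split_ifs with hc
    · have := abs_le.1 (hGauss r hr (ζ h τ r))
      exact ⟨le_min (hF1 _ _) (by simp only [hF]; linarith [this.2]), min_le_left _ _⟩
    · exact ⟨(hFz r hr h hc).le, zero_le_one⟩
  have hlb : ∀ r, 0 ≤ r → ∀ h, Vm h τ r ≤ F r (ζ h τ r) ∧ 0 ≤ Vm h τ r := by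
    intro r hr h
    rw [hVm]
    split_ifs with hc
    · have := abs_le.1 (hGauss r hr (ζ h τ r))
      exact ⟨max_le (hF0 _ _) (by simp only [hF]; linarith [this.1]), le_max_left _ _⟩
    · exact ⟨(hFz r hr h hc).ge, le_rfl⟩
  have hbi : ∀ g : Ω → ℝ, Measurable g → (∀ ω, 0 ≤ g ω) → (∀ ω, g ω ≤ 1) → Integrable g ℙ := by
    intro g hg h0 h1
    refine Integrable.of_bound hg.aestronglyMeasurable 1 (Filter.Eventually.of_forall fun ω => ?_)
    rw [Real.norm_eq_abs, abs_of_nonneg (h0 ω)]; exact h1 ω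
  have hFm : ∀ r, 0 ≤ r → Measurable (fun ω => F r (ζ (H ω) τ r)) ∧
      1 - O r = ∫ ω, F r (ζ (H ω) τ r) := by
    intro r hr
    have hYm : Measurable (fun ω => (I r ω - μ r) / σ r) := ((hIr r).sub_const _).div_const _
    have hzm : Measurable (fun h => ζ h τ r) := by
      simp_rw [hζ]
      fun_prop
    have hind : IndepFun H (fun ω => (I r ω - μ r) / σ r) ℙ :=
      (hindep r hr).comp (ψ := fun x => (x - μ r) / σ r) measurable_id (by fun_prop)
    obtain ⟨h1, h2⟩ := aux_indep H (fun ω => (I r ω - μ r) / σ r) hHmeas hYm hind _ hzm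
    refine ⟨h1.comp hHmeas, ?_⟩
    rw [← h2]
    have hms : MeasurableSet {ω | Real.log (1 + P * H ω * G r / (N₀ + I r ω / PG)) < τ} :=
      measurable_prodMk_left (x := r) hOset
    have h3 := probReal_compl_eq_one_sub (μ := (ℙ : Measure Ω)) hms
    change 1 - (ℙ : Measure Ω).real _ = _
    rw [← h3, measureReal_def]
    congr 1
    refine measure_congr ?_
    filter_upwards [hpos r hr] with ω hω
    have := aux_event P (G r) N₀ PG τ (H ω) (I r ω) (μ r) (σ r) hP hPG hτ (hGpos r hr) (hHnn ω)
      (hσpos r hr) hω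
    rw [← hζ] at this
    exact propext this
  have hVpi : ∀ r, 0 ≤ r → Integrable (fun ω => Vp (H ω) τ r) ℙ := fun r hr =>
    hbi _ (hVpm.comp measurable_prodMk_left)
      (fun ω => (hF0 _ _).trans (hub r hr (H ω)).1) (fun ω => (hub r hr (H ω)).2)
  have hVmi : ∀ r, 0 ≤ r → Integrable (fun ω => Vm (H ω) τ r) ℙ := fun r hr =>
    hbi _ (hVmm.comp measurable_prodMk_left)
      (fun ω => (hlb r hr (H ω)).2) (fun ω => (hlb r hr (H ω)).1.trans (hF1 _ _))
  have hFi : ∀ r, 0 ≤ r → Integrable (fun ω => F r (ζ (H ω) τ r)) ℙ := fun r hr =>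
    hbi _ (hFm r hr).1 (fun ω => hF0 _ _) (fun ω => hF1 _ _)
  have hA : ∀ r, 0 ≤ r → 1 - O r ≤ ∫ ω, Vp (H ω) τ r := fun r hr => by
    rw [(hFm r hr).2]
    exact integral_mono (hFi r hr) (hVpi r hr) fun ω => (hub r hr (H ω)).1
  have hB : ∀ r, 0 ≤ r → ∫ ω, Vm (H ω) τ r ≤ 1 - O r := fun r hr => by
    rw [(hFm r hr).2]
    exact integral_mono (hVmi r hr) (hFi r hr) fun ω => (hlb r hr (H ω)).1
  have hA1 : ∀ r, 0 ≤ r → ∫ ω, Vp (H ω) τ r ≤ 1 := fun r hr => by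
    refine (integral_mono (hVpi r hr) (integrable_const 1) fun ω => (hub r hr (H ω)).2).trans ?_
    simp
  have hB0 : ∀ r, 0 ≤ r → 0 ≤ ∫ ω, Vm (H ω) τ r := fun r hr =>
    integral_nonneg fun ω => (hlb r hr (H ω)).2
  have hint : ∀ g : ℝ → ℝ, Measurable g → (∀ r, 0 ≤ r → 0 ≤ g r ∧ g r ≤ 1) →
      IntegrableOn (fun r => f r * g r) (Set.Ici 0) := by
    intro g hg h
    refine Integrable.mono' hfi (hfmeas.mul hg).aestronglyMeasurable ?_
    refine (ae_restrict_mem measurableSet_Ici).mono fun r hr => ?_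
    have := h r hr
    rw [Real.norm_eq_abs, abs_of_nonneg (mul_nonneg (hfnn r) this.1)]
    exact mul_le_of_le_one_right (hfnn r) this.2
  have hVpI : Measurable (fun r => ∫ ω, Vp (H ω) τ r) :=
    (hVpm.stronglyMeasurable.integral_prod_right).measurable
  have hVmI : Measurable (fun r => ∫ ω, Vm (H ω) τ r) :=
    (hVmm.stronglyMeasurable.integral_prod_right).measurable
  have iO := hint O hOm fun r _ => ⟨hO0 r, hO1 r⟩
  have iS := hint (fun r => 1 - O r) (measurable_const.sub hOm) fun r _ =>
    ⟨by linarith [hO1 r], by linarith [hO0 r]⟩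
  have iA := hint _ hVpI fun r hr => ⟨(by linarith [hO1 r] : 0 ≤ 1 - O r).trans (hA r hr), hA1 r hr⟩
  have iB := hint _ hVmI fun r hr => ⟨hB0 r hr, (hB r hr).trans (by linarith [hO0 r])⟩
  have key : 1 - ∫ r in Set.Ici (0 : ℝ), O r * f r = ∫ r in Set.Ici (0 : ℝ), f r * (1 - O r) := by
    simp_rw [mul_comm (O _), mul_sub, mul_one]
    rw [integral_sub hfi iO, hfint]
  rw [key]
  exact ⟨setIntegral_mono_on iS iA measurableSet_Ici fun r hr =>
      mul_le_mul_of_nonneg_left (hA r hr) (hfnn r),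
    setIntegral_mono_on iB iS measurableSet_Ici fun r hr =>
      mul_le_mul_of_nonneg_left (hB r hr) (hfnn r)⟩

/-- Theorem 7: bounds on the outage capacity `C_o(γ)` under the BARSS association
policy (mixture over tiers and connection distances).  Suprema are taken in
`[0,∞]` (i.e. `ℝ≥0∞`) with `sup ∅ = 0`. -/
theorem barss_outage_capacity_bounds
    {Ω : Type*} [MeasureSpace Ω] [IsProbabilityMeasure (ℙ : Measure Ω)]
    (K : ℕ) (hK : 1 ≤ K)
    (P : Fin K → ℝ) (hP : ∀ k, 0 < P k)
    (G : Fin K → ℝ → ℝ) (hGmeas : ∀ k, Measurable (G k))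
    (hGpos : ∀ k, ∀ r : ℝ, 0 ≤ r → 0 < G k r)
    (N₀ PG : ℝ) (hN₀ : 0 ≤ N₀) (hPG : 1 ≤ PG)
    (pstar : Fin K → ℝ) (hpstar : ∀ k, 0 ≤ pstar k) (hpsum : ∑ k, pstar k = 1)
    (f : Fin K → ℝ → ℝ) (hfmeas : ∀ k, Measurable (f k))
    (hfnn : ∀ k r, 0 ≤ f k r) (hfint : ∀ k, ∫ r in Set.Ici (0 : ℝ), f k r = 1)
    (H : Fin K → Ω → ℝ) (hHmeas : ∀ k, Measurable (H k)) (hHnn : ∀ k ω, 0 ≤ H k ω)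
    (I : Fin K → ℝ → Ω → ℝ)
    (hImeas : ∀ k, Measurable (Function.uncurry (I k)))
    (hInn : ∀ k, ∀ r : ℝ, 0 ≤ r → ∀ ω, 0 ≤ I k r ω)
    (hindep : ∀ k, ∀ r : ℝ, 0 ≤ r → IndepFun (H k) (I k r) ℙ)
    (hI1 : ∀ k, ∀ r : ℝ, 0 ≤ r → Integrable (I k r) ℙ)
    (hI2 : ∀ k, ∀ r : ℝ, 0 ≤ r → Integrable (fun ω => (I k r ω) ^ 2) ℙ)
    (μ σ Ξ : Fin K → ℝ → ℝ)
    (hμmeas : ∀ k, Measurable (μ k)) (hσmeas : ∀ k, Measurable (σ k))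
    (hΞmeas : ∀ k, Measurable (Ξ k))
    (hμ : ∀ k, ∀ r : ℝ, 0 ≤ r → μ k r = ∫ ω, I k r ω)
    (hσ : ∀ k, ∀ r : ℝ, 0 ≤ r → (σ k r) ^ 2 = ∫ ω, (I k r ω - μ k r) ^ 2)
    (hσpos : ∀ k, ∀ r : ℝ, 0 ≤ r → 0 < σ k r)
    (hΞnn : ∀ k, ∀ r : ℝ, 0 ≤ r → 0 ≤ Ξ k r)
    (hpos : ∀ k, ∀ r : ℝ, 0 ≤ r → ∀ᵐ ω ∂(ℙ : Measure Ω), 0 < N₀ + I k r ω / PG)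
    (hGauss : ∀ k, ∀ r : ℝ, 0 ≤ r → ∀ x : ℝ,
      |(ℙ {ω | (I k r ω - μ k r) / σ k r ≤ x}).toReal - stdNormalCDF x| ≤
        Ξ k r * berryC x)
    (ζ Vp Vm : Fin K → ℝ → ℝ → ℝ → ℝ)
    (hζ : ∀ k h τ r, ζ k h τ r =
      (P k * (h * G k r / (Real.exp τ - 1) - N₀ / P k) * PG - μ k r) / σ k r)
    (hVp : ∀ k h τ r, Vp k h τ r =
      if (Real.exp τ - 1) * N₀ / (P k * G k r) ≤ h then
        min 1 (stdNormalCDF (ζ k h τ r) + Ξ k r * berryC (ζ k h τ r)) else 0)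
    (hVm : ∀ k h τ r, Vm k h τ r =
      if (Real.exp τ - 1) * N₀ / (P k * G k r) ≤ h then
        max 0 (stdNormalCDF (ζ k h τ r) - Ξ k r * berryC (ζ k h τ r)) else 0)
    (γ : ℝ) (hγ : γ ∈ Set.Ioo (0 : ℝ) 1)
    (Co : ℝ≥0∞)
    (hCo : Co = sSup (ENNReal.ofReal '' {τ : ℝ | 0 ≤ τ ∧
      (∑ k, pstar k * ∫ r in Set.Ici (0 : ℝ),
        (ℙ {ω | Real.log (1 + P k * H k ω * G k r / (N₀ + I k r ω / PG)) < τ}).toReal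
          * f k r) ≤ γ})) :
    Co ≤ sSup (ENNReal.ofReal '' {τ : ℝ | 0 ≤ τ ∧
        1 - (∑ k, pstar k * ∫ r in Set.Ici (0 : ℝ), f k r * ∫ ω, Vp k (H k ω) τ r) ≤ γ}) ∧
      sSup (ENNReal.ofReal '' {τ : ℝ | 0 ≤ τ ∧
        1 - (∑ k, pstar k * ∫ r in Set.Ici (0 : ℝ), f k r * ∫ ω, Vm k (H k ω) τ r) ≤ γ}) ≤ Co := by
  have core := fun (τ : ℝ) (hτ : 0 < τ) (k : Fin K) =>
    aux_core (P k) (hP k) (G k) (hGmeas k) (hGpos k) N₀ PG hPG (f k) (hfmeas k) (hfnn k)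
      (hfint k) (H k) (hHmeas k) (hHnn k) (I k) (hImeas k) (hInn k) (hindep k) (μ k) (σ k) (Ξ k)
      (hμmeas k) (hσmeas k) (hΞmeas k) (hσpos k) (hpos k) (hGauss k) (ζ k) (Vp k) (Vm k)
      (hζ k) (hVp k) (hVm k) τ hτ
  have hs : ∀ x : Fin K → ℝ, ∑ k, pstar k * (1 - x k) = 1 - ∑ k, pstar k * x k := by
    intro x
    simp only [mul_sub, mul_one, Finset.sum_sub_distrib, hpsum]
  rw [hCo]
  constructor
  · refine sSup_le ?_
    rintro _ ⟨τ, ⟨h0, h1⟩, rfl⟩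
    rcases h0.eq_or_lt with h0' | h0'
    · simp [← h0']
    refine le_sSup ⟨τ, ⟨h0, ?_⟩, rfl⟩
    have := Finset.sum_le_sum fun k (_ : k ∈ Finset.univ) =>
      mul_le_mul_of_nonneg_left (core τ h0' k).1 (hpstar k)
    rw [hs] at this
    linarith
  · refine sSup_le ?_
    rintro _ ⟨τ, ⟨h0, h1⟩, rfl⟩
    rcases h0.eq_or_lt with h0' | h0'
    · simp [← h0']
    refine le_sSup ⟨τ, ⟨h0, ?_⟩, rfl⟩
    have := Finset.sum_le_sum fun k (_ : k ∈ Finset.univ) =>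
      mul_le_mul_of_nonneg_left (core τ h0' k).2 (hpstar k)
    rw [hs] at this
    linarith
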